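/- arXiv:1001.4566 — 5 statements merged into one kernel-verified Lean document; each statement's English description precedes it below -/
import Mathlib

section
/- Suppose ν is a ℤ^d-valuation on K trivial on k, and ν(g) ∈ ℕ^d for every m ≥ 0 and every g ∈ V^m∖{0}, so that Γ ⊆ ℕ×ℕ^d. Let Cone(Γ) ⊆ ℝ×ℝ^d be the closure of the convex hull of the image of Γ, and define the Okounkov body Δ(V) = {x ∈ ℝ^d : (1,x) ∈ Cone(Γ)}. If Δ(V) equals the convex hull in ℝ^d of the finite set ν(V∖{0}) ⊆ ℕ^d, then the monoid Γ is finitely generated. -/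
instance (d : ℕ) : WellFoundedLT (Fin d) := Finite.to_wellFoundedLT

/-- The valuation semigroup `Γ_ν(V) = {(m, ν g) : g ∈ V^m \ {0}}`. -/
def valSemigroup {k K : Type*} [Field k] [Field K] [Algebra k K] {d : ℕ}
    (ν : K → Lex (Fin d → ℤ)) (V : Submodule k K) : Set (ℕ × Lex (Fin d → ℤ)) :=
  {p | ∃ g ∈ V ^ p.1, g ≠ 0 ∧ ν g = p.2}

/-- The natural embedding of `ℕ × ℤ^d` into `ℝ × ℝ^d`. -/
def embGamma {d : ℕ} (p : ℕ × Lex (Fin d → ℤ)) : ℝ × (Fin d → ℝ) :=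
  ((p.1 : ℝ), fun i => (ofLex p.2 i : ℝ))

/-- The natural embedding of `ℤ^d` into `ℝ^d`. -/
def embZd {d : ℕ} (u : Lex (Fin d → ℤ)) : Fin d → ℝ :=
  fun i => (ofLex u i : ℝ)

/-- `Cone(Γ)`: the closure of the convex hull of (the image in `ℝ × ℝ^d` of) `Γ`. -/
def coneGamma {k K : Type*} [Field k] [Field K] [Algebra k K] {d : ℕ}
    (ν : K → Lex (Fin d → ℤ)) (V : Submodule k K) : Set (ℝ × (Fin d → ℝ)) :=
  closure (convexHull ℝ (embGamma '' valSemigroup ν V))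

/-- The Okounkov body `Δ(V) = Cone(Γ) ∩ ({1} × ℝ^d)`. -/
def okounkovBody {k K : Type*} [Field k] [Field K] [Algebra k K] {d : ℕ}
    (ν : K → Lex (Fin d → ℤ)) (V : Submodule k K) : Set (Fin d → ℝ) :=
  {x | ((1 : ℝ), x) ∈ coneGamma ν V}

theorem okb_core {d : ℕ} {ι : Type*} [Fintype ι] (a : ι → Lex (Fin d → ℤ))
    (ha : ∀ j i, 0 ≤ ofLex (a j) i) (G : Set (ℕ × Lex (Fin d → ℤ)))
    (hG : ∀ x ∈ G, ∀ y ∈ G, x + y ∈ G) (h0 : (0 : ℕ × Lex (Fin d → ℤ)) ∈ G)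
    (h1 : ∀ j, ((1 : ℕ), a j) ∈ G)
    (h : ∀ x ∈ G, ∃ l : ι → ℝ, (∀ j, 0 ≤ l j) ∧ ∑ j, l j = (x.1 : ℝ) ∧
      ∀ i, ∑ j, l j * (ofLex (a j) i : ℝ) = (ofLex x.2 i : ℝ)) :
    ∃ S : Finset (ℕ × Lex (Fin d → ℤ)),
      (S : Set (ℕ × Lex (Fin d → ℤ))) ⊆ G ∧
      ∀ x ∈ G, x ∈ AddSubmonoid.closure (S : Set (ℕ × Lex (Fin d → ℤ))) := by
  classical
  let P : (ι → ℕ) → ℕ × Lex (Fin d → ℤ) := fun n => ∑ j, n j • ((1 : ℕ), a j)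
  have hPadd : ∀ n n', P (n + n') = P n + P n' := by
    intro n n'
    simp only [P, Pi.add_apply, add_smul, Finset.sum_add_distrib]
  have hP1 : ∀ n, (P n).1 = ∑ j, n j := by
    intro n; simp [P, Prod.fst_sum]
  have hP2 : ∀ n i, ofLex (P n).2 i = ∑ j, (n j : ℤ) * ofLex (a j) i := by
    intro n i
    let φ : ℕ × Lex (Fin d → ℤ) →+ ℤ := ⟨⟨fun u => ofLex u.2 i, rfl⟩, fun _ _ => rfl⟩
    change φ (∑ j, n j • ((1 : ℕ), a j)) = _
    rw [map_sum]
    refine Finset.sum_congr rfl fun j _ => ?_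
    rw [map_nsmul, nsmul_eq_mul]; rfl
  let F : Set (ℕ × Lex (Fin d → ℤ)) :=
    {f | f.1 ≤ Fintype.card ι ∧ ∀ i, 0 ≤ ofLex f.2 i ∧ ofLex f.2 i ≤ ∑ j, ofLex (a j) i}
  have hF : F.Finite := by
    have := (Set.finite_Iic (Fintype.card ι)).prod
      (Set.finite_Icc (0 : Fin d → ℤ) (fun i => ∑ j, ofLex (a j) i))
    have h2 := this.image (fun p : ℕ × (Fin d → ℤ) => (p.1, toLex p.2))
    refine h2.subset ?_
    rintro ⟨m, u⟩ ⟨hm, hu⟩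
    exact ⟨(m, ofLex u), ⟨hm, fun i => (hu i).1, fun i => (hu i).2⟩, rfl⟩
  have hdec : ∀ x ∈ G, ∃ f ∈ F, ∃ n, x = f + P n := by
    intro x hx
    obtain ⟨l, hl, hl1, hl2⟩ := h x hx
    have fl : ∀ j, (⌊l j⌋₊ : ℝ) ≤ l j := fun j => Nat.floor_le (hl j)
    have fu : ∀ j, l j ≤ (⌊l j⌋₊ : ℝ) + 1 := fun j => (Nat.lt_floor_add_one _).le
    have b1 : ∑ j, ⌊l j⌋₊ ≤ x.1 := by
      have : (∑ j, (⌊l j⌋₊ : ℝ)) ≤ x.1 := hl1 ▸ Finset.sum_le_sum fun j _ => fl j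
      exact_mod_cast this
    have b2 : x.1 ≤ ∑ j, ⌊l j⌋₊ + Fintype.card ι := by
      have : (x.1 : ℝ) ≤ ∑ j, ((⌊l j⌋₊ : ℝ) + 1) := hl1 ▸ Finset.sum_le_sum fun j _ => fu j
      simp only [Finset.sum_add_distrib, Finset.sum_const, Finset.card_univ, nsmul_eq_mul,
        mul_one] at this
      exact_mod_cast this
    have har : ∀ j i, (0 : ℝ) ≤ (ofLex (a j) i : ℝ) := fun j i => by exact_mod_cast ha j i
    have c1 : ∀ i, ∑ j, (⌊l j⌋₊ : ℤ) * ofLex (a j) i ≤ ofLex x.2 i := by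
      intro i
      have : ∑ j, (⌊l j⌋₊ : ℝ) * (ofLex (a j) i : ℝ) ≤ (ofLex x.2 i : ℝ) :=
        hl2 i ▸ Finset.sum_le_sum fun j _ => mul_le_mul_of_nonneg_right (fl j) (har j i)
      exact_mod_cast this
    have c2 : ∀ i, ofLex x.2 i ≤ ∑ j, (⌊l j⌋₊ : ℤ) * ofLex (a j) i + ∑ j, ofLex (a j) i := by
      intro i
      have : (ofLex x.2 i : ℝ) ≤ ∑ j, ((⌊l j⌋₊ : ℝ) + 1) * (ofLex (a j) i : ℝ) :=
        hl2 i ▸ Finset.sum_le_sum fun j _ => mul_le_mul_of_nonneg_right (fu j) (har j i)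
      simp only [add_mul, one_mul, Finset.sum_add_distrib] at this
      exact_mod_cast this
    refine ⟨(x.1 - ∑ j, ⌊l j⌋₊, x.2 - (P fun j => ⌊l j⌋₊).2), ⟨?_, ?_⟩,
      (fun j => ⌊l j⌋₊), ?_⟩
    · simp only; omega
    · intro i
      have e : ofLex (x.2 - (P fun j => ⌊l j⌋₊).2) i
        = ofLex x.2 i - ∑ j, (⌊l j⌋₊ : ℤ) * ofLex (a j) i := by
        rw [← hP2 (fun j => ⌊l j⌋₊) i]; rfl
      simp only [e]
      have := c1 i
      have := c2 i
      constructor <;> linarith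
    · ext1
      · simp only [Prod.fst_add, hP1]; omega
      · simp
  let M : (ℕ × Lex (Fin d → ℤ)) → Set (ι → ℕ) := fun f => {n | Minimal (fun n => f + P n ∈ G) n}
  have hM : ∀ f, (M f).Finite := fun f =>
    WellQuasiOrderedLE.finite_of_isAntichain (setOfPred_minimal_antichain _)
  have hfin : (Set.range (fun j => ((1 : ℕ), a j)) ∪
      ⋃ f ∈ F, (fun n => f + P n) '' M f).Finite :=
    (Set.finite_range _).union (hF.biUnion fun f _ => (hM f).image _)
  refine ⟨hfin.toFinset, ?_, ?_⟩
  · rw [hfin.coe_toFinset]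
    rintro x (⟨j, rfl⟩ | hx)
    · exact h1 j
    · simp only [Set.mem_iUnion] at hx
      obtain ⟨f, _, n, hn, rfl⟩ := hx
      exact hn.1
  · intro x hx
    rw [hfin.coe_toFinset]
    obtain ⟨f, hf, n, rfl⟩ := hdec x hx
    obtain ⟨n', hle, hn'⟩ := exists_minimal_le_of_wellFoundedLT (fun n => f + P n ∈ G) n hx
    have e : f + P n = (f + P n') + P (n - n') := by
      rw [add_assoc, ← hPadd, add_tsub_cancel_of_le hle]
    rw [e]
    refine add_mem (AddSubmonoid.subset_closure (Or.inr ?_)) ?_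
    · simp only [Set.mem_iUnion]
      exact ⟨f, hf, n', hn', rfl⟩
    · change ∑ j, (n - n') j • ((1 : ℕ), a j) ∈ AddSubmonoid.closure _
      refine sum_mem fun j _ => nsmul_mem ?_ _
      apply AddSubmonoid.subset_closure
      left
      exact ⟨j, rfl⟩

theorem okb_finite {k K : Type*} [Field k] [Field K] [Algebra k K] {d : ℕ}
    (ν : K → Lex (Fin d → ℤ)) (V : Submodule k K)
    (hVfd : FiniteDimensional k ↥V)
    (hadd : ∀ f g : K, f ≠ 0 → g ≠ 0 → f + g ≠ 0 → min (ν f) (ν g) ≤ ν (f + g))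
    (hmul : ∀ f g : K, f ≠ 0 → g ≠ 0 → ν (f * g) = ν f + ν g)
    (htriv : ∀ c : k, c ≠ 0 → ν (algebraMap k K c) = 0) :
    (ν '' ((V : Set K) \ {0})).Finite := by
  classical
  let W : Lex (Fin d → ℤ) → Submodule k K := fun u =>
    { carrier := {g | g ∈ V ∧ (g ≠ 0 → u ≤ ν g)}
      zero_mem' := ⟨V.zero_mem, fun h => absurd rfl h⟩
      add_mem' := by
        rintro f g ⟨hf, hf'⟩ ⟨hg, hg'⟩
        refine ⟨V.add_mem hf hg, fun hfg => ?_⟩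
        by_cases h1 : f = 0
        · subst h1; simpa using hg' (by simpa using hfg)
        by_cases h2 : g = 0
        · subst h2; simpa using hf' h1
        exact (le_min (hf' h1) (hg' h2)).trans (hadd f g h1 h2 hfg)
      smul_mem' := by
        rintro c g ⟨hg, hg'⟩
        refine ⟨V.smul_mem c hg, fun h => ?_⟩
        have hc : c ≠ 0 := by rintro rfl; simp at h
        have hg0 : g ≠ 0 := by rintro rfl; simp at h
        rw [Algebra.smul_def, hmul _ _ (by simpa using hc) hg0, htriv c hc, zero_add]
        exact hg' hg0 }
  have hWV : ∀ u, W u ≤ V := fun u g hg => hg.1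
  have hlt : ∀ u ∈ ν '' ((V : Set K) \ {0}), ∀ v, u < v →
      Module.finrank k (W v) < Module.finrank k (W u) := by
    rintro _ ⟨g, ⟨hg, hg0⟩, rfl⟩ v huv
    have : FiniteDimensional k (W (ν g)) := Submodule.finiteDimensional_of_le (hWV _)
    apply Submodule.finrank_lt_finrank_of_lt
    refine lt_of_le_of_ne (fun f hf => ⟨hf.1, fun h => huv.le.trans (hf.2 h)⟩) ?_
    intro e
    have : g ∈ W (ν g) := ⟨hg, fun _ => le_rfl⟩
    rw [← e] at this
    exact absurd (this.2 hg0) (not_le.2 huv)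
  refine Set.Finite.of_finite_image (f := fun u => Module.finrank k (W u)) ?_ ?_
  · refine (Set.finite_Iic (Module.finrank k V)).subset ?_
    rintro _ ⟨u, _, rfl⟩
    exact Submodule.finrank_mono (hWV u)
  · intro u hu v hv e
    rcases lt_trichotomy u v with h | h | h
    · exact absurd e (hlt u hu v h).ne'
    · exact h
    · exact absurd e (hlt v hv u h).ne

theorem finitely_generated_of_okounkov_body_eq_convexHull
    {k K : Type*} [Field k] [Field K] [Algebra k K] {d : ℕ}
    (ν : K → Lex (Fin d → ℤ)) (V : Submodule k K)
    (hVne : V ≠ ⊥) (hVfd : FiniteDimensional k ↥V)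
    (hadd : ∀ f g : K, f ≠ 0 → g ≠ 0 → f + g ≠ 0 → min (ν f) (ν g) ≤ ν (f + g))
    (hmul : ∀ f g : K, f ≠ 0 → g ≠ 0 → ν (f * g) = ν f + ν g)
    (htriv : ∀ c : k, c ≠ 0 → ν (algebraMap k K c) = 0)
    (hnat : ∀ (m : ℕ), ∀ g ∈ V ^ m, g ≠ 0 → ∀ i : Fin d, 0 ≤ ofLex (ν g) i)
    (hΔ : okounkovBody ν V = convexHull ℝ (embZd '' (ν '' ((V : Set K) \ {0})))) :
    ∃ S : Finset (ℕ × Lex (Fin d → ℤ)),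
      (S : Set (ℕ × Lex (Fin d → ℤ))) ⊆ valSemigroup ν V ∧
      ∀ x ∈ valSemigroup ν V, x ∈ AddSubmonoid.closure (S : Set (ℕ × Lex (Fin d → ℤ))) := by
  classical
  have hA := okb_finite ν V hVfd hadd hmul htriv
  have hone : ν 1 = 0 := by simpa using htriv 1 one_ne_zero
  have hzero : (0 : ℕ × Lex (Fin d → ℤ)) ∈ valSemigroup ν V :=
    ⟨1, by simp, one_ne_zero, hone⟩
  obtain ⟨A, hAe⟩ : ∃ A : Finset (Lex (Fin d → ℤ)), (A : Set _) = ν '' ((V : Set K) \ {0}) :=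
    ⟨hA.toFinset, hA.coe_toFinset⟩
  have hmemA : ∀ j ∈ A, ∃ g ∈ V, g ≠ 0 ∧ ν g = j := by
    intro j hj
    have : j ∈ (A : Set _) := hj
    rw [hAe] at this
    obtain ⟨g, hg, rfl⟩ := this
    exact ⟨g, hg.1, hg.2, rfl⟩
  have hinj : Function.Injective (embZd (d := d)) := by
    intro u v e
    funext i
    have := congrFun e i
    simp only [embZd] at this
    exact_mod_cast this
  refine okb_core (ι := A) (fun j => j.1) ?_ (valSemigroup ν V) ?_ hzero ?_ ?_
  · rintro ⟨j, hj⟩ i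
    obtain ⟨g, hg, hg0, rfl⟩ := hmemA j hj
    exact hnat 1 g (by simpa using hg) hg0 i
  · rintro ⟨m, u⟩ ⟨f, hf, hf0, rfl⟩ ⟨n, v⟩ ⟨g, hg, hg0, rfl⟩
    refine ⟨f * g, ?_, mul_ne_zero hf0 hg0, hmul f g hf0 hg0⟩
    simp only [Prod.fst_add, pow_add]
    exact Submodule.mul_mem_mul hf hg
  · rintro ⟨j, hj⟩
    obtain ⟨g, hg, hg0, rfl⟩ := hmemA j hj
    exact ⟨g, by simpa using hg, hg0, rfl⟩
  · rintro ⟨m, u⟩ hx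
    rcases Nat.eq_zero_or_pos m with rfl | hm
    · obtain ⟨g, hg, hg0, hgu⟩ := hx
      have hu : u = 0 := by
        simp only [pow_zero] at hg
        obtain ⟨c, rfl⟩ := Submodule.mem_one.1 hg
        exact hgu.symm.trans (htriv c (by rintro rfl; simp at hg0))
      subst hu
      refine ⟨fun _ => 0, fun _ => le_rfl, by simp, fun i => ?_⟩
      have : ofLex (0 : Lex (Fin d → ℤ)) i = 0 := rfl
      simp only [this]; simp
    · have hm' : (0 : ℝ) < m := by exact_mod_cast hm
      have hmem : ((m : ℝ)⁻¹ • embZd u) ∈ okounkovBody ν V := by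
        apply subset_closure
        have i0 : embGamma (0 : ℕ × Lex (Fin d → ℤ)) ∈
          convexHull ℝ (embGamma '' valSemigroup ν V) := subset_convexHull ℝ _ ⟨_, hzero, rfl⟩
        have i1 : embGamma (m, u) ∈
          convexHull ℝ (embGamma '' valSemigroup ν V) := subset_convexHull ℝ _ ⟨_, hx, rfl⟩
        have hm1 : (m : ℝ)⁻¹ ≤ 1 := inv_le_one_of_one_le₀ (by exact_mod_cast hm)
        have := convex_convexHull ℝ (embGamma '' valSemigroup ν V) i0 i1
          (sub_nonneg.2 hm1) (inv_nonneg.2 hm'.le) (by ring)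
        convert this using 1
        ext i
        · simp [embGamma, hm'.ne']
        · have : ofLex (0 : Lex (Fin d → ℤ)) i = 0 := rfl
          simp only [embGamma, embZd, Prod.snd_add, Prod.smul_snd, Pi.add_apply, Pi.smul_apply,
            Prod.snd_zero, this]
          simp
      rw [hΔ, ← hAe, ← Finset.coe_image, Finset.mem_convexHull'] at hmem
      obtain ⟨w, hw, hw1, hw2⟩ := hmem
      rw [Finset.sum_image (fun _ _ _ _ e => hinj e)] at hw1 hw2
      refine ⟨fun j => m * w (embZd j.1), fun j => mul_nonneg hm'.le
        (hw _ (Finset.mem_image_of_mem _ j.2)), ?_, fun i => ?_⟩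
      · rw [Finset.sum_coe_sort A (fun j => (m : ℝ) * w (embZd j)), ← Finset.mul_sum, hw1, mul_one]
      · rw [Finset.sum_coe_sort A (fun j => (m : ℝ) * w (embZd j) * (ofLex j i : ℝ))]
        have := congrFun hw2 i
        simp only [Finset.sum_apply, Pi.smul_apply, smul_eq_mul, embZd] at this
        simp only [mul_assoc, ← Finset.mul_sum]
        rw [show ∑ j ∈ A, w (embZd j) * (ofLex j i : ℝ) = _ from this]
        field_simp
end

section
/- Let S be a finite subset of ℤ × ℤ^d. Then there exists an additive (ℤ-linear) map π : ℤ × ℤ^d → ℤ such that π(m,u) < π(n,v) whenever (m,u) and (n,v) lie in S and (m,u) < (n,v) in the modified order. -/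
/-- The strict modified order on `ℤ × ℤ^d`: `(m,u) < (n,v)` iff `m < n`, or `m = n` and
`u > v` lexicographically. -/
def ModLT {d : ℕ} (a b : ℤ × Lex (Fin d → ℤ)) : Prop :=
  a.1 < b.1 ∨ (a.1 = b.1 ∧ b.2 < a.2)


theorem combine_aux {G : Type*} [AddCommGroup G] (S : Finset G) (f g : G →+ ℤ) :
    ∃ h : G →+ ℤ, ∀ a ∈ S, ∀ b ∈ S,
      (f a < f b ∨ (f a = f b ∧ g a < g b)) → h a < h b := by
  refine ⟨(2 * (∑ x ∈ S, |g x|) + 1) • f + g, ?_⟩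
  intro a ha b hb hab
  have h1 : |g a| ≤ ∑ x ∈ S, |g x| :=
    Finset.single_le_sum (f := fun x => |g x|) (fun _ _ => abs_nonneg _) ha
  have h2 : |g b| ≤ ∑ x ∈ S, |g x| :=
    Finset.single_le_sum (f := fun x => |g x|) (fun _ _ => abs_nonneg _) hb
  simp only [AddMonoidHom.add_apply, AddMonoidHom.smul_apply, smul_eq_mul]
  generalize (∑ x ∈ S, |g x|) = M at *
  rw [abs_le] at h1 h2
  rcases hab with h | ⟨h, h'⟩
  · nlinarith
  · rw [h]; linarith

theorem lex_aux (d : ℕ) : ∀ (S : Finset (Fin d → ℤ)),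
    ∃ h : (Fin d → ℤ) →+ ℤ, ∀ a ∈ S, ∀ b ∈ S,
      (∃ i, (∀ j, j < i → a j = b j) ∧ a i < b i) → h a < h b := by
  induction d with
  | zero => intro S; exact ⟨0, fun a _ b _ ⟨i, _⟩ => i.elim0⟩
  | succ d ih =>
    intro S
    classical
    obtain ⟨r, hr⟩ := ih (S.image fun a j => a j.succ)
    obtain ⟨h, hh⟩ := combine_aux S (Pi.evalAddMonoidHom (fun _ : Fin (d+1) => ℤ) 0)
      (AddMonoidHom.mk' (fun a => r (fun j => a j.succ)) (fun a b => by
        rw [← map_add]; rfl))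
    refine ⟨h, fun a ha b hb ⟨i, hi, hlt⟩ => hh a ha b hb ?_⟩
    induction i using Fin.cases with
    | zero => left; exact hlt
    | succ i =>
      right
      refine ⟨hi 0 (Fin.succ_pos i), ?_⟩
      exact hr _ (Finset.mem_image_of_mem _ ha) _ (Finset.mem_image_of_mem _ hb)
        ⟨i, fun j hj => hi j.succ (Fin.succ_lt_succ_iff.2 hj), hlt⟩

theorem exists_linear_projection_respecting_order
    {d : ℕ} (S : Finset (ℤ × Lex (Fin d → ℤ))) :
    ∃ π : (ℤ × Lex (Fin d → ℤ)) →+ ℤ,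
      ∀ a ∈ S, ∀ b ∈ S, ModLT a b → π a < π b := by
  classical
  obtain ⟨r, hr⟩ := lex_aux d (S.image fun a => ofLex a.2)
  obtain ⟨h, hh⟩ := combine_aux S (AddMonoidHom.fst ℤ (Lex (Fin d → ℤ)))
    (AddMonoidHom.mk' (fun a => - r (ofLex a.2)) (fun a b => by
      rw [Prod.snd_add, ofLex_add, map_add, neg_add]))
  refine ⟨h, fun a ha b hb hab => hh a ha b hb ?_⟩
  rcases hab with h | ⟨h, h'⟩
  · exact Or.inl h
  · refine Or.inr ⟨h, ?_⟩
    exact neg_lt_neg (hr _ (Finset.mem_image_of_mem _ hb) _ (Finset.mem_image_of_mem _ ha) h')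
end

section
/- Suppose ν is a ℤ^d-valuation on K trivial on k. Then for every (m,u) ∈ ℕ×ℤ^d, the set Γ_{≤(m,u)} = {(m',u') ∈ Γ : (m',u') ≤ (m,u) in the modified order} is finite. -/
/-- The modified order on `ℕ × ℤ^d`: `(m,u) ≤ (m',u')` iff `m < m'`, or `m = m'` and
`u ≥ u'` lexicographically. -/
def ModLE {d : ℕ} (a b : ℕ × Lex (Fin d → ℤ)) : Prop :=
  a.1 < b.1 ∨ (a.1 = b.1 ∧ b.2 ≤ a.2)

theorem finite_values_aux {k K G : Type*} [Field k] [Field K] [Algebra k K]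
    [LinearOrder G] (ν : K → G) (W : Submodule k K) (hW : FiniteDimensional k W)
    (hadd : ∀ f g : K, f ≠ 0 → g ≠ 0 → f + g ≠ 0 → min (ν f) (ν g) ≤ ν (f + g))
    (hsmul : ∀ (c : k) (f : K), c ≠ 0 → f ≠ 0 → ν (c • f) = ν f) :
    {u | ∃ g ∈ W, g ≠ 0 ∧ ν g = u}.Finite := by
  let F : G → Submodule k K := fun u =>
    { carrier := {g | g ∈ W ∧ (g ≠ 0 → u ≤ ν g)}
      zero_mem' := ⟨W.zero_mem, fun h => absurd rfl h⟩
      add_mem' := by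
        rintro a b ⟨ha, ha'⟩ ⟨hb, hb'⟩
        refine ⟨W.add_mem ha hb, fun h => ?_⟩
        by_cases h1 : a = 0
        · subst h1
          rw [zero_add] at h ⊢
          exact hb' h
        by_cases h2 : b = 0
        · subst h2
          rw [add_zero] at h ⊢
          exact ha' h
        exact le_trans (le_min (ha' h1) (hb' h2)) (hadd a b h1 h2 h)
      smul_mem' := by
        rintro c a ⟨ha, ha'⟩
        refine ⟨W.smul_mem c ha, fun h => ?_⟩
        have hc : c ≠ 0 := fun hc => h (by rw [hc, zero_smul])
        have h1 : a ≠ 0 := fun hc => h (by rw [hc, smul_zero])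
        rw [hsmul c a hc h1]
        exact ha' h1 }
  have hFW : ∀ u, F u ≤ W := fun u g hg => hg.1
  have hlt : ∀ u ∈ {u | ∃ g ∈ W, g ≠ 0 ∧ ν g = u}, ∀ v, u < v →
      Module.finrank k (F v) < Module.finrank k (F u) := by
    rintro u ⟨g, hg, hg0, rfl⟩ v huv
    have : FiniteDimensional k (F (ν g)) := Submodule.finiteDimensional_of_le (hFW _)
    apply Submodule.finrank_lt_finrank_of_lt
    refine lt_of_le_of_ne (fun x hx => ⟨hx.1, fun h => huv.le.trans (hx.2 h)⟩) fun he => ?_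
    have hm : g ∈ F (ν g) := ⟨hg, fun _ => le_rfl⟩
    rw [← he] at hm
    exact absurd (hm.2 hg0) (not_le.mpr huv)
  refine Set.Finite.of_finite_image (f := fun u => Module.finrank k (F u)) ?_ ?_
  · refine (Set.finite_Iic (Module.finrank k W)).subset ?_
    rintro _ ⟨u, -, rfl⟩
    exact Submodule.finrank_mono (hFW u)
  · intro u hu v hv h
    rcases lt_trichotomy u v with h1 | h1 | h1
    · exact absurd h (hlt u hu v h1).ne'
    · exact h1
    · exact absurd h (hlt v hv u h1).ne

theorem valSemigroup_finite_below
    {k K : Type*} [Field k] [Field K] [Algebra k K] {d : ℕ}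
    (ν : K → Lex (Fin d → ℤ)) (V : Submodule k K)
    (hVne : V ≠ ⊥) (hVfd : FiniteDimensional k ↥V)
    (hadd : ∀ f g : K, f ≠ 0 → g ≠ 0 → f + g ≠ 0 → min (ν f) (ν g) ≤ ν (f + g))
    (hmul : ∀ f g : K, f ≠ 0 → g ≠ 0 → ν (f * g) = ν f + ν g)
    (htriv : ∀ c : k, c ≠ 0 → ν (algebraMap k K c) = 0) :
    ∀ (m : ℕ) (u : Lex (Fin d → ℤ)),
      {p ∈ valSemigroup ν V | ModLE p (m, u)}.Finite := by
  intro m u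
  have hfin : ∀ n : ℕ, {w | ∃ g ∈ V ^ n, g ≠ 0 ∧ ν g = w}.Finite := by
    intro n
    have hfg : (V ^ n).FG := Submodule.FG.pow (Module.Finite.iff_fg.mp hVfd) n
    refine finite_values_aux ν (V ^ n) (Module.Finite.iff_fg.mpr hfg) hadd ?_
    intro c f hc hf
    rw [Algebra.smul_def, hmul _ _ (by simpa using hc) hf, htriv c hc, zero_add]
  refine ((Set.finite_Iic m).biUnion
    (fun n _ => (hfin n).image (fun w => (n, w)))).subset ?_
  rintro ⟨n, w⟩ ⟨hp, hle⟩
  have hn : n ≤ m := by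
    rcases hle with h | h
    · exact le_of_lt h
    · exact le_of_eq h.1
  exact Set.mem_biUnion (Set.mem_Iic.mpr hn) ⟨w, hp, rfl⟩
end

section
/- Let k be a field, and define ν : k[x,y]∖{0} → ℤ×ℤ by ν(f) = the lexicographically smallest pair (i,j) such that the coefficient of x^i y^j in f is nonzero (this is the valuation attached to the flag {x=0} ⊃ {(0,0)}). Let V ⊆ k[x,y] be the k-linear span of {1, x, y + x·y³, x·y}, and let V·V ⊆ k[x,y] be the k-span of all products of two elements of V. Then: (a) ν(f) ∈ {(0,0), (1,0), (0,1), (1,1)} for every f ∈ V∖{0}; (b) x²y³ ∈ V·V and ν(x²y³) = (2,3); and (c) (2,3) is not the sum of two elements of {(0,0), (1,0), (0,1), (1,1)}. In particular, ν(V·V∖{0}) strictly contains ν(V∖{0}) + ν(V∖{0}). -/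
open MvPolynomial Pointwise

/-- The lexicographic order on `ℤ × ℤ`. -/
def zlexLe (a b : ℤ × ℤ) : Prop :=
  a.1 < b.1 ∨ (a.1 = b.1 ∧ a.2 ≤ b.2)

/-- The coefficient of `x^i y^j` in a polynomial in `k[x,y]`. -/
noncomputable def coeffXY {k : Type*} [Field k] (i j : ℕ) (f : MvPolynomial (Fin 2) k) : k :=
  MvPolynomial.coeff (Finsupp.single (0 : Fin 2) i + Finsupp.single (1 : Fin 2) j) f

lemma coeffXY_mon {k : Type*} [Field k] (i j p q : ℕ) :
    coeffXY i j ((X 0 : MvPolynomial (Fin 2) k) ^ p * (X 1) ^ q) = if i = p ∧ j = q then 1 else 0 := by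
  unfold coeffXY
  rw [X_pow_eq_monomial, X_pow_eq_monomial, monomial_mul, coeff_monomial]
  have : (Finsupp.single (0 : Fin 2) p + Finsupp.single (1 : Fin 2) q =
      Finsupp.single (0 : Fin 2) i + Finsupp.single (1 : Fin 2) j) ↔ (i = p ∧ j = q) := by
    constructor
    · intro h
      have h0 := DFunLike.congr_fun h 0
      have h1 := DFunLike.congr_fun h 1
      simp at h0 h1
      exact ⟨h0.symm, h1.symm⟩
    · rintro ⟨rfl, rfl⟩; rfl
  simp [this]

lemma fin2_eq (m : Fin 2 →₀ ℕ) :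
    m = Finsupp.single (0 : Fin 2) (m 0) + Finsupp.single (1 : Fin 2) (m 1) := by
  ext t; fin_cases t <;> simp

lemma coeff_eq_XY {k : Type*} [Field k] (f : MvPolynomial (Fin 2) k) (m : Fin 2 →₀ ℕ) :
    coeff m f = coeffXY (m 0) (m 1) f := by
  unfold coeffXY; rw [← fin2_eq]

lemma nu_eq {k : Type*} [Field k]
    (ν : MvPolynomial (Fin 2) k → ℤ × ℤ)
    (hν : ∀ f : MvPolynomial (Fin 2) k, f ≠ 0 →
      (∃ i j : ℕ, ν f = ((i : ℤ), (j : ℤ)) ∧ coeffXY i j f ≠ 0) ∧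
      (∀ i j : ℕ, coeffXY i j f ≠ 0 → zlexLe (ν f) ((i : ℤ), (j : ℤ))))
    (f : MvPolynomial (Fin 2) k) (i j : ℕ) (h : coeffXY i j f ≠ 0)
    (h' : ∀ a b : ℕ, coeffXY a b f ≠ 0 → zlexLe ((i : ℤ), (j : ℤ)) ((a : ℤ), (b : ℤ))) :
    ν f = ((i : ℤ), (j : ℤ)) := by
  have hf : f ≠ 0 := by rintro rfl; simp [coeffXY] at h
  obtain ⟨⟨a, b, e, hab⟩, h2⟩ := hν f hf
  have h3 := h2 i j h
  have h4 := h' a b hab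
  rw [e] at h3 ⊢
  simp only [zlexLe] at h3 h4
  ext <;> simp only <;> omega

lemma nu_mul {k : Type*} [Field k]
    (ν : MvPolynomial (Fin 2) k → ℤ × ℤ)
    (hν : ∀ f : MvPolynomial (Fin 2) k, f ≠ 0 →
      (∃ i j : ℕ, ν f = ((i : ℤ), (j : ℤ)) ∧ coeffXY i j f ≠ 0) ∧
      (∀ i j : ℕ, coeffXY i j f ≠ 0 → zlexLe (ν f) ((i : ℤ), (j : ℤ))))
    (f g : MvPolynomial (Fin 2) k) (hf : f ≠ 0) (hg : g ≠ 0) : ν (f * g) = ν f + ν g := by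
  obtain ⟨⟨a, b, e, hab⟩, h2⟩ := hν f hf
  obtain ⟨⟨c, d, e', hcd⟩, h2'⟩ := hν g hg
  rw [e] at h2 ⊢
  rw [e'] at h2' ⊢
  have := nu_eq ν hν (f * g) (a + c) (b + d) ?_ ?_
  · rw [this]; simp
  · have : coeffXY (a + c) (b + d) (f * g) = coeffXY a b f * coeffXY c d g := by
      conv_lhs => unfold coeffXY
      rw [coeff_mul, Finset.sum_eq_single
        (Finsupp.single (0 : Fin 2) a + Finsupp.single (1 : Fin 2) b,
         Finsupp.single (0 : Fin 2) c + Finsupp.single (1 : Fin 2) d)]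
      · rfl
      · rintro ⟨m, n⟩ hmn hne
        by_contra hc
        have hm := left_ne_zero_of_mul hc
        have hn := right_ne_zero_of_mul hc
        simp only [coeff_eq_XY _ m, coeff_eq_XY _ n] at hm hn
        have l1 := h2 _ _ hm
        have l2 := h2' _ _ hn
        rw [Finset.HasAntidiagonal.mem_antidiagonal] at hmn
        have h0 := DFunLike.congr_fun hmn 0
        have h1 := DFunLike.congr_fun hmn 1
        simp at h0 h1
        simp only [zlexLe] at l1 l2
        apply hne
        have q1 : m 0 = a := by omega
        have q2 : m 1 = b := by omega
        have q3 : n 0 = c := by omega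
        have q4 : n 1 = d := by omega
        rw [fin2_eq m, fin2_eq n, q1, q2, q3, q4]
      · intro hn
        exfalso; apply hn
        rw [Finset.HasAntidiagonal.mem_antidiagonal]
        simp only [Finsupp.single_add]
        abel
    rw [this]; exact mul_ne_zero hab hcd
  · intro p q hpq
    unfold coeffXY at hpq
    rw [coeff_mul] at hpq
    obtain ⟨⟨m, n⟩, hmn, hc⟩ := Finset.exists_ne_zero_of_sum_ne_zero hpq
    have hm := left_ne_zero_of_mul hc
    have hn := right_ne_zero_of_mul hc
    simp only [coeff_eq_XY _ m, coeff_eq_XY _ n] at hm hn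
    have l1 := h2 _ _ hm
    have l2 := h2' _ _ hn
    rw [Finset.HasAntidiagonal.mem_antidiagonal] at hmn
    have h0 := DFunLike.congr_fun hmn 0
    have h1 := DFunLike.congr_fun hmn 1
    simp at h0 h1
    simp only [zlexLe] at l1 l2 ⊢
    push_cast
    omega

lemma coeffXY_V {k : Type*} [Field k] (a b c d : k) (i j : ℕ) :
    coeffXY i j (a • (1 : MvPolynomial (Fin 2) k) + (b • X 0 +
      (c • (X 1 + X 0 * (X 1) ^ 3) + d • (X 0 * X 1)))) =
    a * (if i = 0 ∧ j = 0 then 1 else 0) + (b * (if i = 1 ∧ j = 0 then 1 else 0) +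
      (c * ((if i = 0 ∧ j = 1 then 1 else 0) + (if i = 1 ∧ j = 3 then 1 else 0)) +
       d * (if i = 1 ∧ j = 1 then 1 else 0))) := by
  simp only [← coeffXY_mon]
  simp [coeffXY, mul_add]

theorem counterexample_valuation_image_of_square
    {k : Type*} [Field k]
    (ν : MvPolynomial (Fin 2) k → ℤ × ℤ)
    -- ν f is the lexicographically smallest (i,j) such that the coefficient of x^i y^j
    -- in f is nonzero
    (hν : ∀ f : MvPolynomial (Fin 2) k, f ≠ 0 →
      (∃ i j : ℕ, ν f = ((i : ℤ), (j : ℤ)) ∧ coeffXY i j f ≠ 0) ∧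
      (∀ i j : ℕ, coeffXY i j f ≠ 0 → zlexLe (ν f) ((i : ℤ), (j : ℤ))))
    (V : Submodule k (MvPolynomial (Fin 2) k))
    (hV : V = Submodule.span k
      ({1, X 0, X 1 + X 0 * (X 1) ^ 3, X 0 * X 1} : Set (MvPolynomial (Fin 2) k))) :
    -- (a)
    (∀ f ∈ V, f ≠ 0 → ν f ∈ ({(0, 0), (1, 0), (0, 1), (1, 1)} : Set (ℤ × ℤ))) ∧
    -- (b)
    ((X 0 : MvPolynomial (Fin 2) k) ^ 2 * (X 1) ^ 3 ∈ V * V ∧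
      ν ((X 0 : MvPolynomial (Fin 2) k) ^ 2 * (X 1) ^ 3) = (2, 3)) ∧
    -- (c)
    (∀ a ∈ ({(0, 0), (1, 0), (0, 1), (1, 1)} : Set (ℤ × ℤ)),
      ∀ b ∈ ({(0, 0), (1, 0), (0, 1), (1, 1)} : Set (ℤ × ℤ)), a + b ≠ ((2 : ℤ), (3 : ℤ))) ∧
    -- in particular: ν(V·V ∖ {0}) strictly contains ν(V∖{0}) + ν(V∖{0})
    (ν '' ((V : Set (MvPolynomial (Fin 2) k)) \ {0}) +
        ν '' ((V : Set (MvPolynomial (Fin 2) k)) \ {0}) ⊂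
      ν '' (((V * V : Submodule k (MvPolynomial (Fin 2) k)) : Set (MvPolynomial (Fin 2) k)) \ {0})) := by
  have hA : ∀ f ∈ V, f ≠ 0 → ν f ∈ ({(0, 0), (1, 0), (0, 1), (1, 1)} : Set (ℤ × ℤ)) := by
    intro f hf h0
    obtain ⟨⟨i, j, e, hij⟩, h2⟩ := hν f h0
    rw [hV] at hf
    simp only [Submodule.mem_span_insert, Submodule.mem_span_singleton] at hf
    obtain ⟨a, _, ⟨b, _, ⟨c, _, ⟨d, rfl⟩, rfl⟩, rfl⟩, rfl⟩ := hf
    rw [e] at h2 ⊢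
    rw [coeffXY_V] at hij
    by_cases h13 : i = 1 ∧ j = 3
    · obtain ⟨rfl, rfl⟩ := h13
      have := h2 0 1 (by rw [coeffXY_V]; simpa using hij)
      simp [zlexLe] at this
    · by_contra hcon
      simp only [Set.mem_insert_iff, Set.mem_singleton_iff, Prod.mk.injEq, not_or] at hcon
      obtain ⟨n1, n2, n3, n4⟩ := hcon
      apply hij
      rw [if_neg (by omega), if_neg (by omega), if_neg (by omega), if_neg h13, if_neg (by omega)]
      simp
  have hC : ∀ a ∈ ({(0, 0), (1, 0), (0, 1), (1, 1)} : Set (ℤ × ℤ)),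
      ∀ b ∈ ({(0, 0), (1, 0), (0, 1), (1, 1)} : Set (ℤ × ℤ)), a + b ≠ ((2 : ℤ), (3 : ℤ)) := by
    intro a ha b hb
    simp only [Set.mem_insert_iff, Set.mem_singleton_iff] at ha hb
    rcases ha with rfl | rfl | rfl | rfl <;> rcases hb with rfl | rfl | rfl | rfl <;> decide
  have hB : (X 0 : MvPolynomial (Fin 2) k) ^ 2 * (X 1) ^ 3 ∈ V * V := by
    have m : ∀ g ∈ ({1, X 0, X 1 + X 0 * (X 1) ^ 3, X 0 * X 1} : Set (MvPolynomial (Fin 2) k)),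
        g ∈ V := by
      intro g hg; rw [hV]; exact Submodule.subset_span hg
    have e : (X 0 : MvPolynomial (Fin 2) k) ^ 2 * (X 1) ^ 3 =
        X 0 * (X 1 + X 0 * (X 1) ^ 3) - 1 * (X 0 * X 1) := by ring
    rw [e]
    exact Submodule.sub_mem _ (Submodule.mul_mem_mul (m _ (by simp)) (m _ (by simp)))
      (Submodule.mul_mem_mul (m _ (by simp)) (m _ (by simp)))
  have hN : ν ((X 0 : MvPolynomial (Fin 2) k) ^ 2 * (X 1) ^ 3) = (2, 3) := by
    have := nu_eq ν hν ((X 0 : MvPolynomial (Fin 2) k) ^ 2 * (X 1) ^ 3) 2 3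
      (by rw [coeffXY_mon]; simp) (by
        intro a b h
        rw [coeffXY_mon] at h
        have : a = 2 ∧ b = 3 := by by_contra hh; simp [hh] at h
        obtain ⟨rfl, rfl⟩ := this
        simp [zlexLe])
    simpa using this
  refine ⟨hA, ⟨hB, hN⟩, hC, ?_⟩
  rw [Set.ssubset_iff_exists]
  refine ⟨?_, (2, 3), ⟨_, ⟨hB, ?_⟩, hN⟩, ?_⟩
  · rintro _ ⟨_, ⟨f, ⟨hf, hf0⟩, rfl⟩, _, ⟨g, ⟨hg, hg0⟩, rfl⟩, rfl⟩
    exact ⟨f * g, ⟨Submodule.mul_mem_mul hf hg, mul_ne_zero hf0 hg0⟩, nu_mul ν hν f g hf0 hg0⟩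
  · simp
  · rintro ⟨_, ⟨f, ⟨hf, hf0⟩, rfl⟩, _, ⟨g, ⟨hg, hg0⟩, rfl⟩, h⟩
    exact hC _ (hA f hf hf0) _ (hA g hg hg0) h
end

section
/- Let Γ = {(0,0)} ∪ {(m,r) ∈ ℕ×ℕ : m ≥ 1 and r ≤ 3m−1}. Then Γ is an additive submonoid of ℕ×ℕ which is not finitely generated: no finite subset of Γ generates Γ as a monoid. In fact, for every m ≥ 1 the element (m, 3m−1) is not a sum of two nonzero elements of Γ, so every generating set of Γ must contain all the points (m, 3m−1). -/
/-- The semigroup `Γ = {(0,0)} ∪ {(m,r) : m ≥ 1, r ≤ 3m − 1} ⊆ ℕ × ℕ`. -/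
def GammaEll : Set (ℕ × ℕ) :=
  {p | p = 0 ∨ (1 ≤ p.1 ∧ p.2 ≤ 3 * p.1 - 1)}

theorem gammaEll_submonoid_not_finitely_generated :
    -- Γ is an additive submonoid of ℕ × ℕ
    ((0 : ℕ × ℕ) ∈ GammaEll ∧ ∀ a ∈ GammaEll, ∀ b ∈ GammaEll, a + b ∈ GammaEll) ∧
    -- Γ is not finitely generated as a monoid
    (¬ ∃ S : Finset (ℕ × ℕ), (S : Set (ℕ × ℕ)) ⊆ GammaEll ∧
        ∀ x ∈ GammaEll, x ∈ AddSubmonoid.closure (S : Set (ℕ × ℕ))) ∧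
    -- for every m ≥ 1, (m, 3m−1) is not a sum of two nonzero elements of Γ
    (∀ m : ℕ, 1 ≤ m → ∀ a ∈ GammaEll, ∀ b ∈ GammaEll, a ≠ 0 → b ≠ 0 →
        a + b ≠ (m, 3 * m - 1)) ∧
    -- hence every generating set of Γ contains all the points (m, 3m−1)
    (∀ S : Set (ℕ × ℕ), S ⊆ GammaEll →
        (∀ x ∈ GammaEll, x ∈ AddSubmonoid.closure S) →
        ∀ m : ℕ, 1 ≤ m → (m, 3 * m - 1) ∈ S) := by
  have key : ∀ S : Set (ℕ × ℕ), S ⊆ GammaEll →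
        (∀ x ∈ GammaEll, x ∈ AddSubmonoid.closure S) →
        ∀ m : ℕ, 1 ≤ m → (m, 3 * m - 1) ∈ S := by
    intro S hS hgen m hm
    have aux : ∀ x ∈ AddSubmonoid.closure S, x = 0 ∨ (x ∈ S ∧ x.2 + 1 ≤ 3 * x.1) ∨
        x.2 + 2 ≤ 3 * x.1 := by
      intro x hx
      induction hx using AddSubmonoid.closure_induction with
      | mem x hx =>
        rcases hS hx with h | h
        · exact Or.inl h
        · exact Or.inr (Or.inl ⟨hx, by omega⟩)
      | zero => exact Or.inl rfl
      | add x y _ _ hx hy =>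
        rcases hx with rfl | hx
        · simpa using hy
        rcases hy with rfl | hy
        · simpa using Or.inr hx
        refine Or.inr (Or.inr ?_)
        have h1 : x.2 + 1 ≤ 3 * x.1 := by
          rcases hx with h | h
          · exact h.2
          · omega
        have h2 : y.2 + 1 ≤ 3 * y.1 := by
          rcases hy with h | h
          · exact h.2
          · omega
        simp only [Prod.fst_add, Prod.snd_add]
        omega
    rcases aux _ (hgen (m, 3 * m - 1) (Or.inr ⟨hm, le_rfl⟩)) with h | h | h
    · have := congrArg Prod.fst h
      simp at this
      omega
    · exact h.1
    · simp only at h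
      omega
  refine ⟨⟨Or.inl rfl, ?_⟩, ?_, ?_, key⟩
  · rintro a (rfl | ha) b (rfl | hb)
    · exact Or.inl (by simp)
    · exact Or.inr (by simpa using hb)
    · exact Or.inr (by simpa using ha)
    · refine Or.inr ?_
      simp only [Prod.fst_add, Prod.snd_add]
      omega
  · rintro ⟨S, hS, hgen⟩
    have h := key S hS hgen
    refine Set.infinite_of_injective_forall_mem (f := fun n : ℕ => (n + 1, 3 * (n + 1) - 1))
      ?_ (fun n => h (n + 1) (by omega)) S.finite_toSet
    intro a b hab
    have := congrArg Prod.fst hab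
    simpa using this
  · rintro m hm a (rfl | ha) b (rfl | hb) h1 h2 h
    · exact h1 rfl
    · exact h1 rfl
    · exact h2 rfl
    · have e1 := congrArg Prod.fst h
      have e2 := congrArg Prod.snd h
      simp only [Prod.fst_add, Prod.snd_add] at e1 e2
      omega
end
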